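/- Let k ≥ 1 and let v = (v₁,…,v_k) ∈ ℝ^k satisfy 0 ≤ v₁ ≤ ⋯ ≤ v_k ≤ 1, with mean v̄ = (1/k)Σᵢvᵢ, median v_med (equal to v_{(k+1)/2} if k is odd and to (v_{k/2} + v_{k/2+1})/2 if k is even), jumps jᵢ = 1/2 + v̄ − v_{k+1−i} (1 ≤ i ≤ k), and gaps δᵢ = v_{i+1} − vᵢ (1 ≤ i ≤ k−1). Define γ(x) = (#{i : vᵢ + x − v̄ > 1/2})/k and PG = ∫_ℝ |γ(x) + γ(1−x) − 1| dx. Then the following are equivalent: (1) PG = 0; (2) jᵢ + j_{k+1−i} = 1 for all 1 ≤ i ≤ k; (3) (vᵢ + v_{k+1−i})/2 = v̄ for all 1 ≤ i ≤ k; (4) (vᵢ + v_{k+1−i})/2 = v_med for all 1 ≤ i ≤ k; (5) δᵢ = δ_{k−i} for all 1 ≤ i ≤ k−1. -/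

import Mathlib

open MeasureTheory

lemma card_lt_of_lt {k : ℕ} (u w : Fin k → ℝ) (hu : Monotone u) (hw : Monotone w) (i : Fin k)
    (t : ℝ) (h1 : u i < t) (h2 : t < w i) :
    (Finset.univ.filter (fun i => t ≤ u i)).card < (Finset.univ.filter (fun i => t < w i)).card := by
  apply Finset.card_lt_card
  rw [Finset.ssubset_iff_of_subset]
  · exact ⟨i, by simpa using h2, by simpa using h1⟩
  · intro a ha
    simp only [Finset.mem_filter, Finset.mem_univ, true_and] at ha ⊢
    rcases le_total a i with h | h
    · have := hu h; linarith
    · have := hw h; linarith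

lemma card_lt_le {k : ℕ} (u : Fin k → ℝ) (t : ℝ) :
    (Finset.univ.filter (fun i => t < u i)).card ≤ (Finset.univ.filter (fun i => t ≤ u i)).card := by
  apply Finset.card_le_card
  intro a ha
  simp only [Finset.mem_filter, Finset.mem_univ, true_and] at ha ⊢
  exact ha.le

lemma card_refl {k : ℕ} (v : Fin k → ℝ) (c t : ℝ) :
    ((Finset.univ.filter (fun i => c - t < v i)).card : ℝ) =
      k - (Finset.univ.filter (fun i : Fin k => t ≤ c - v i.rev)).card := by
  have e : (Finset.univ.filter (fun i : Fin k => t ≤ c - v i.rev)).card =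
      (Finset.univ.filter (fun i => ¬ (c - t < v i))).card := by
    apply Finset.card_bij (fun i _ => i.rev)
    · intro a ha
      simp only [Finset.mem_filter, Finset.mem_univ, true_and] at ha ⊢
      linarith
    · intro a _ b _ h
      exact Fin.rev_injective h
    · intro b hb
      refine ⟨b.rev, ?_, by simp⟩
      simp only [Finset.mem_filter, Finset.mem_univ, true_and, Fin.rev_rev] at hb ⊢
      linarith
  have := Finset.card_filter_add_card_filter_not (s := (Finset.univ : Finset (Fin k)))
    (fun i => c - t < v i)
  rw [Finset.card_univ, Fintype.card_fin] at this
  rw [e]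
  have h2 : ((Finset.univ.filter (fun i => c - t < v i)).card : ℝ) +
    (Finset.univ.filter (fun i => ¬ (c - t < v i))).card = k := by exact_mod_cast this
  linarith

set_option maxHeartbeats 2000000 in
/-- Partisan Symmetry Characterization: with
`PG = ∫_ℝ |γ(x) + γ(1−x) − 1| dx` for the seats-votes curve `γ` under uniform
partisan swing, jumps `jᵢ = 1/2 + v̄ − v_{k+1−i}` and gaps `δᵢ = v_{i+1} − vᵢ`,
the following are equivalent:
(1) `PG = 0`; (2) `jᵢ + j_{k+1−i} = 1` for all `i`; (3) `(vᵢ + v_{k+1−i})/2 = v̄` for all `i`;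
(4) `(vᵢ + v_{k+1−i})/2 = v_med` for all `i`; (5) `δᵢ = δ_{k−i}` for all `i`. -/
theorem partisan_symmetry_characterization
    (k : ℕ) (hk : 1 ≤ k) (v : Fin k → ℝ)
    (hmono : Monotone v) (h0 : ∀ i, 0 ≤ v i) (h1 : ∀ i, v i ≤ 1)
    (vbar : ℝ) (hvbar : vbar = (∑ i, v i) / k)
    (vmed : ℝ)
    (hvmed : if k % 2 = 1 then vmed = v ⟨(k - 1) / 2, by omega⟩
      else vmed = (v ⟨k / 2 - 1, by omega⟩ + v ⟨k / 2, by omega⟩) / 2)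
    (γ : ℝ → ℝ)
    (hγ : ∀ x, γ x = (Nat.card {i : Fin k // v i + x - vbar > 1 / 2} : ℝ) / k)
    (PG : ℝ) (hPG : PG = ∫ x : ℝ, |γ x + γ (1 - x) - 1|)
    (j : Fin k → ℝ) (hj : ∀ i, j i = 1 / 2 + vbar - v i.rev)
    (δ : Fin (k - 1) → ℝ)
    (hδ : ∀ i : Fin (k - 1),
      δ i = v ⟨i.val + 1, by have := i.isLt; omega⟩ - v ⟨i.val, by have := i.isLt; omega⟩) :
    [PG = 0,
     ∀ i : Fin k, j i + j i.rev - 1 = 0,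
     ∀ i : Fin k, (v i + v i.rev) / 2 = vbar,
     ∀ i : Fin k, (v i + v i.rev) / 2 = vmed,
     ∀ i : Fin (k - 1), δ i = δ i.rev].TFAE := by
  have hk0 : (k : ℝ) ≠ 0 := by positivity
  have hkp : (0 : ℝ) < k := by positivity
  have hrevsum : ∑ i : Fin k, v i.rev = ∑ i, v i := Equiv.sum_comp Fin.revPerm v
  have hconst : ∀ c : ℝ, (∀ i : Fin k, (v i + v i.rev) / 2 = c) → c = vbar := by
    intro c hc
    have h := Finset.sum_congr (rfl : (Finset.univ : Finset (Fin k)) = Finset.univ)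
      (fun i _ => hc i)
    rw [← Finset.sum_div, Finset.sum_add_distrib, hrevsum] at h
    simp only [Finset.sum_const, Finset.card_univ, Fintype.card_fin, nsmul_eq_mul] at h
    rw [hvbar, eq_div_iff hk0]
    linarith
  have hγ' : ∀ x, γ x = ((Finset.univ.filter (fun i => 1 / 2 + vbar - x < v i)).card : ℝ) / k := by
    intro x
    rw [hγ, Nat.card_eq_fintype_card, Fintype.card_subtype]
    congr 3
    ext i
    simp only [Finset.mem_filter, Finset.mem_univ, true_and]
    constructor <;> intro h <;> linarith
  have hg : ∀ x, γ x + γ (1 - x) - 1 =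
      (((Finset.univ.filter (fun i => 1 / 2 + vbar - x < v i)).card : ℝ) -
      (Finset.univ.filter (fun i : Fin k => 1 / 2 + vbar - x ≤ 2 * vbar - v i.rev)).card) / k := by
    intro x
    have e : 1 / 2 + vbar - (1 - x) = 2 * vbar - (1 / 2 + vbar - x) := by ring
    rw [hγ' x, hγ' (1 - x), e, card_refl v (2 * vbar) (1 / 2 + vbar - x), sub_div, sub_div, div_self hk0]
    ring
  have hone : ∀ x, 1 / 2 + vbar < x → γ x = 1 := by
    intro x hx
    rw [hγ', Finset.filter_true_of_mem]
    · simp [hk0]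
    · intro i _; have := h0 i; linarith
  have hzero : ∀ x, x ≤ vbar - 1 / 2 → γ x = 0 := by
    intro x hx
    rw [hγ', Finset.filter_false_of_mem]
    · simp
    · intro i _; have := h1 i; linarith
  have hγmono : Monotone γ := by
    intro x y hxy
    rw [hγ', hγ']
    gcongr with i
  have hγ0 : ∀ x, 0 ≤ γ x := fun x => by rw [hγ']; positivity
  have hγ1 : ∀ x, γ x ≤ 1 := fun x => by
    rw [hγ', div_le_one hkp]
    have := Finset.card_filter_le (Finset.univ : Finset (Fin k)) (fun i => 1 / 2 + vbar - x < v i)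
    rw [Finset.card_univ, Fintype.card_fin] at this
    exact_mod_cast this
  have hInteg : Integrable (fun x : ℝ => |γ x + γ (1 - x) - 1|) := by
    have hmeas : Measurable (fun x : ℝ => |γ x + γ (1 - x) - 1|) := by
      have := hγmono.measurable
      have h2 : Measurable (fun x : ℝ => γ (1 - x)) := this.comp (by fun_prop)
      exact ((this.add h2).sub_const 1).norm
    have hs : Function.support (fun x : ℝ => |γ x + γ (1 - x) - 1|) ⊆
        Set.Icc (-(3 + |vbar|)) (3 + |vbar|) := by
      intro x hx
      by_contra hn
      apply hx
      have a1 := le_abs_self vbar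
      have a2 := neg_abs_le vbar
      rw [Set.mem_Icc, not_and_or, not_le, not_le] at hn
      rcases hn with hn | hn
      · simp only []
        rw [hzero x (by linarith), hone (1 - x) (by linarith)]; simp
      · simp only []
        rw [hone x (by linarith), hzero (1 - x) (by linarith)]; simp
    rw [← integrableOn_iff_integrable_of_support_subset hs]
    refine Measure.integrableOn_of_bounded (M := 1) (by simp) hmeas.aestronglyMeasurable ?_
    refine Filter.Eventually.of_forall fun x => ?_
    rw [Real.norm_eq_abs, abs_abs, abs_le]
    have := hγ0 x; have := hγ1 x; have := hγ0 (1 - x); have := hγ1 (1 - x)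
    constructor <;> linarith
  have hwmono : Monotone (fun i : Fin k => 2 * vbar - v i.rev) := by
    intro a b hab
    have := hmono (Fin.rev_le_rev.mpr hab)
    simp only []
    linarith
  tfae_have 1 → 3 := by
    intro h
    rw [hPG, integral_eq_zero_iff_of_nonneg (fun x => abs_nonneg _) hInteg] at h
    have hd := Measure.dense_of_ae h
    intro i
    by_contra hne
    have key : ∀ a b : ℝ, a < b → ∃ t, a < t ∧ t < b ∧
        (Finset.univ.filter (fun i => t < v i)).card =
        (Finset.univ.filter (fun i : Fin k => t ≤ 2 * vbar - v i.rev)).card := by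
      intro a b hab
      obtain ⟨x, hx, hx1, hx2⟩ := hd.exists_between
        (show 1 / 2 + vbar - b < 1 / 2 + vbar - a by linarith)
      refine ⟨1 / 2 + vbar - x, by linarith, by linarith, ?_⟩
      have hx' : |γ x + γ (1 - x) - 1| = 0 := hx
      rw [abs_eq_zero, hg, div_eq_zero_iff, or_iff_left hk0, sub_eq_zero] at hx'
      exact_mod_cast hx'
    rcases lt_or_gt_of_ne hne with hlt | hlt
    · obtain ⟨t, t1, t2, e⟩ := key (v i) (2 * vbar - v i.rev) (by linarith)
      have l1 := card_lt_of_lt v _ hmono hwmono i t t1 t2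
      have l2 := card_lt_le v t
      have l3 := card_lt_le (fun i : Fin k => 2 * vbar - v i.rev) t
      omega
    · obtain ⟨t, t1, t2, e⟩ := key (2 * vbar - v i.rev) (v i) (by linarith)
      have l1 := card_lt_of_lt _ v hwmono hmono i t t1 t2
      omega
  tfae_have 3 → 1 := by
    intro h
    rw [hPG]
    apply integral_eq_zero_of_ae
    have hc := (Set.finite_range (fun i => 1 / 2 + vbar - v i)).countable.ae_notMem
      (volume : Measure ℝ)
    filter_upwards [hc] with x hx
    rw [hg]
    have : (Finset.univ.filter (fun i => 1 / 2 + vbar - x < v i)) =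
        (Finset.univ.filter (fun i : Fin k => 1 / 2 + vbar - x ≤ 2 * vbar - v i.rev)) := by
      ext i
      simp only [Finset.mem_filter, Finset.mem_univ, true_and]
      have e : 2 * vbar - v i.rev = v i := by have := h i; linarith
      rw [e]
      refine ⟨le_of_lt, fun hl => lt_of_le_of_ne hl fun he => hx ⟨i, ?_⟩⟩
      simp only []
      linarith
    rw [this]
    simp
  tfae_have 2 ↔ 3 := by
    apply forall_congr'
    intro i
    rw [hj, hj, Fin.rev_rev]
    constructor <;> intro h <;> linarith
  tfae_have 4 → 3 := by
    intro h
    rw [← hconst vmed h]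
    exact h
  tfae_have 3 → 4 := by
    intro h
    have : vmed = vbar := by
      split_ifs at hvmed with hp
      · have h2 := h ⟨(k - 1) / 2, by omega⟩
        have e : Fin.rev (⟨(k - 1) / 2, by omega⟩ : Fin k) = ⟨(k - 1) / 2, by omega⟩ := by
          ext; simp only [Fin.val_rev]; omega
        rw [e] at h2
        linarith
      · have h2 := h ⟨k / 2 - 1, by omega⟩
        have e : Fin.rev (⟨k / 2 - 1, by omega⟩ : Fin k) = ⟨k / 2, by omega⟩ := by
          ext; simp only [Fin.val_rev]; omega
        rw [e] at h2
        linarith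
    rw [this]
    exact h
  have hδ2 : ∀ i : Fin (k - 1), δ i.rev = v (Fin.rev ⟨i.val, by have := i.isLt; omega⟩) -
      v (Fin.rev ⟨i.val + 1, by have := i.isLt; omega⟩) := by
    intro i
    have := i.isLt
    rw [hδ]
    congr 2
    · ext; simp only [Fin.val_rev]; omega
    · ext; simp only [Fin.val_rev]; omega
  tfae_have 3 → 5 := by
    intro h i
    rw [hδ2, hδ]
    have := h ⟨i.val, by have := i.isLt; omega⟩
    have := h ⟨i.val + 1, by have := i.isLt; omega⟩
    linarith
  tfae_have 5 → 3 := by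
    intro h
    have hc : ∀ n : ℕ, ∀ hn : n < k, (v ⟨n, hn⟩ + v (Fin.rev ⟨n, hn⟩)) / 2 =
        (v ⟨0, hk⟩ + v (Fin.rev ⟨0, hk⟩)) / 2 := by
      intro n
      induction n with
      | zero => intro hn; rfl
      | succ m ih =>
        intro hn
        rw [← ih (by omega)]
        have h2 := h ⟨m, by omega⟩
        rw [hδ2, hδ] at h2
        simp only [] at h2
        linarith
    have hc' : ∀ i : Fin k, (v i + v i.rev) / 2 = (v ⟨0, hk⟩ + v (Fin.rev ⟨0, hk⟩)) / 2 :=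
      fun i => hc i.val i.isLt
    rw [← hconst _ hc']
    exact hc'
  tfae_finish
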